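/- arXiv:1709.08795 — 2 statements merged into one kernel-verified Lean document; each statement's English description precedes it below -/
import Mathlib

section
/- Consider the single-index model Y = f(⟨X, β*⟩) + ε, where X ∈ ℝ^d has an everywhere positive, twice continuously differentiable density p, β* ∈ ℝ^d with ‖β*‖₂ = 1, f : ℝ → ℝ is twice continuously differentiable, and ε is a mean-zero random variable independent of X. Assume the second-order Stein identity applies to the function x ↦ f(⟨x, β*⟩) (integrability of f(⟨x,β*⟩)·T_p(x) and of f''(⟨x,β*⟩), and vanishing of the boundary terms in the double integration by parts), and that Y·T_p(X) is entrywise integrable. Then E[Y · T_p(X)] = E[f''(⟨X, β*⟩)] · β* β*ᵀ. -/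
/-!
By independence and `E ε = 0` the noise drops out, and the claim becomes
`∫ g ∂_j ∂_k p = β_j β_k ∫ f''(⟨x, β⟩) p` over Lebesgue measure, where `g x = f(⟨x, β⟩)`.

The intermediate term `∂_j g ∂_k p` of the double integration by parts is not assumed integrable, so
the two integrations by parts cannot be separated. For `j = k` both are done at once on lines
parallel to `e_j`, where `g ∂_j² p - ∂_j² g p = ∂_j (g ∂_j p - ∂_j g p)` (`integral_diag`). If
`j ≠ k` and one of `β_j`, `β_k` vanishes, then `g` is constant in that coordinate direction and one
integration gives zero (`integral_mixed_of_eq_zero`). If both are nonzero, let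
`v = e_j - (β_j / β_k) e_k`. Since `v ⊥ β`, `g` is constant along `v`, so on almost every line
parallel to `v` either `g = 0` or `∂_v² p` is integrable. In the latter case `∂_v p` has limits at
both ends, which must be zero because `p` is integrable on the line
(`tendsto_deriv_zero_of_integrable`). Hence `∫ g ∂_v² p = 0` (`integral_sheared`), and expanding
`∂_v²` expresses the mixed entry through the diagonal ones.
-/

open MeasureTheory ProbabilityTheory Filter

/-- The second-order score function `T_p(x) = ∇²p(x)/p(x)` of a density `p` on `ℝ^d`,
entrywise. -/
noncomputable def score2 {d : ℕ} (p : (Fin d → ℝ) → ℝ) (x : Fin d → ℝ) (j k : Fin d) : ℝ :=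
  fderiv ℝ (fun y => fderiv ℝ p y (Pi.single k 1)) x (Pi.single j 1) / p x

/-- If `q` is integrable on `ℝ` and `q'` has a limit at one end, the limit is `0`: by the mean value
theorem the integrable function `t ↦ q (t + 1) - q t` has the same limit. -/
lemma tendsto_deriv_zero_of_integrable {q q' : ℝ → ℝ} {l : Filter ℝ} {L : ℝ}
    (hl : l = atTop ∨ l = atBot)
    (hq : ∀ t, HasDerivAt q (q' t) t) (hint : Integrable q) (hL : Tendsto q' l (nhds L)) :
    L = 0 := by
  have hmv : ∀ t : ℝ, ∃ ξ ∈ Set.Ioo t (t + 1), q' ξ = q (t + 1) - q t := fun t => by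
    obtain ⟨ξ, hξ, h⟩ := exists_hasDerivAt_eq_slope q q' (lt_add_one t)
      (fun x _ => (hq x).continuousAt.continuousWithinAt) (fun x _ => hq x)
    exact ⟨ξ, hξ, by simpa using h⟩
  choose ξ hξ hξq using hmv
  have hξl : Tendsto ξ l l := by
    rcases hl with rfl | rfl
    · exact tendsto_atTop_mono (fun t => (hξ t).1.le) tendsto_id
    · exact tendsto_atBot_mono (fun t => (hξ t).2.le) (tendsto_atBot_add_const_right _ _ tendsto_id)
  have hr : Integrable (fun t => q (t + 1) - q t) := (hint.comp_add_right 1).sub hint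
  refine IntegrableAtFilter.eq_zero_of_tendsto (f := fun t => q (t + 1) - q t) (μ := volume)
    (hr.integrableAtFilter l) ?_ ((hL.comp hξl).congr hξq)
  rcases hl with rfl | rfl
  · intro s hs
    obtain ⟨b, hb⟩ := mem_atTop_sets.1 hs
    rw [← top_le_iff, ← Real.volume_Ici (a := b)]
    exact measure_mono hb
  · intro s hs
    obtain ⟨b, hb⟩ := mem_atBot_sets.1 hs
    rw [← top_le_iff, ← Real.volume_Iic (a := b)]
    exact measure_mono hb

/-- The constant `a` may vanish, in which case nothing is known about the integrability of `q''`.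
Otherwise `q'` has limits at both ends, and these are `0` because `q` is integrable. -/
lemma integral_second_deriv_eq_zero {q q' q'' : ℝ → ℝ} (a : ℝ)
    (hq : ∀ t, HasDerivAt q (q' t) t) (hq' : ∀ t, HasDerivAt q' (q'' t) t)
    (hint : Integrable q) (hint' : Integrable fun t => a * q'' t) :
    ∫ t, a * q'' t = 0 := by
  rcases eq_or_ne a 0 with rfl | ha
  · simp
  have hi : Integrable q'' := by
    have h := hint'.const_mul a⁻¹
    simpa [ha] using h
  have htop := tendsto_limUnder_of_hasDerivAt_of_integrableOn_Ioi (a := 0) (fun t _ => hq' t)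
    hi.integrableOn
  have hbot := tendsto_limUnder_of_hasDerivAt_of_integrableOn_Iic (a := 0) (fun t _ => hq' t)
    hi.integrableOn
  rw [integral_const_mul, integral_of_hasDerivAt_of_tendsto hq' hi hbot htop,
    tendsto_deriv_zero_of_integrable (Or.inl rfl) hq hint htop,
    tendsto_deriv_zero_of_integrable (Or.inr rfl) hq hint hbot]
  simp

lemma ae_integrable_slice {d : ℕ} {F : (Fin d → ℝ) → ℝ} (hF : Integrable F) (j : Fin d) :
    ∀ᵐ x, Integrable fun t => F (Function.update x j t) := by
  obtain _ | n := d
  · exact j.elim0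
  have e := volume_preserving_piFinSuccAbove (fun _ : Fin (n + 1) => ℝ) j
  have hF' := (e.symm.integrable_comp_emb (MeasurableEquiv.measurableEmbedding _)).2 hF
  rw [Measure.volume_eq_prod] at hF'
  have h := hF'.prod_left_ae
  have h2 := (Measure.quasiMeasurePreserving_snd (μ := (volume : Measure ℝ))
    (ν := (volume : Measure (Fin n → ℝ)))).ae h
  have h3 := e.quasiMeasurePreserving.ae h2
  filter_upwards [h3] with x hx
  refine hx.congr (.of_forall fun t => ?_)
  simp [MeasurableEquiv.piFinSuccAbove, Fin.insertNthEquiv]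

/-- Fubini in the `j`-th coordinate, with slices written through `Function.update` so that the
`j`-th coordinate of the base point is irrelevant. -/
lemma integral_eq_zero_of_slice {d : ℕ} {F : (Fin d → ℝ) → ℝ} (hF : Integrable F) (j : Fin d)
    (h0 : ∀ᵐ x, ∫ t, F (Function.update x j t) = 0) : ∫ x, F x = 0 := by
  obtain _ | n := d
  · exact j.elim0
  have e := volume_preserving_piFinSuccAbove (fun _ : Fin (n + 1) => ℝ) j
  have hF' := (e.symm.integrable_comp_emb (MeasurableEquiv.measurableEmbedding _)).2 hF
  rw [← e.symm.integral_comp (MeasurableEquiv.measurableEmbedding _)]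
  have h1 := e.symm.quasiMeasurePreserving.ae h0
  rw [Measure.volume_eq_prod] at hF' h1 ⊢
  have h2 := Measure.ae_ae_of_ae_prod h1
  obtain ⟨s, hs⟩ := h2.exists
  refine (integral_prod_symm _ hF').trans (integral_eq_zero_of_ae ?_)
  filter_upwards [hs] with y hy
  rw [Pi.zero_apply, ← hy]
  refine integral_congr_ae (.of_forall fun t => ?_)
  simp [MeasurableEquiv.piFinSuccAbove, Fin.insertNthEquiv]

/-- The shear `x ↦ x + c x_j e_k`, which maps lines parallel to `e_j` to lines parallel to
`e_j + c e_k`. -/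
def shear {d : ℕ} (j k : Fin d) (c : ℝ) (x : Fin d → ℝ) : Fin d → ℝ :=
  x + (c * x j) • Pi.single k (1 : ℝ)

lemma measurePreserving_shear {d : ℕ} {j k : Fin d} (hjk : j ≠ k) (c : ℝ) :
    MeasurePreserving (shear j k c) := by
  convert Real.volume_preserving_transvectionStruct ⟨k, j, hjk.symm, c⟩ using 1
  ext x i
  simp [shear, Matrix.TransvectionStruct.toMatrix, Matrix.transvection, Pi.single_apply]
  rw [Matrix.single_mulVec]
  simp [Function.update_apply]

lemma hasDerivAt_shear_update {d : ℕ} (j k : Fin d) (c : ℝ) (x : Fin d → ℝ) (t : ℝ) :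
    HasDerivAt (fun t => shear j k c (Function.update x j t))
      (Pi.single j 1 + c • Pi.single k 1) t := by
  unfold shear
  simp only [Function.update_self]
  have := (((hasDerivAt_id t).const_mul c).smul_const (Pi.single k (1:ℝ) : Fin d → ℝ))
  convert! (hasDerivAt_update x j t).add this using 1
  simp

/-- With `c = -β_j / β_k` the direction `e_j + c e_k` is orthogonal to `β`, so `⟨·, β⟩` is constant
on the sheared lines. -/
lemma inner_shear {d : ℕ} {j k : Fin d} (β : Fin d → ℝ) (hk : β k ≠ 0)
    (x : Fin d → ℝ) (t : ℝ) :
    ∑ l, shear j k (-β j / β k) (Function.update x j t) l * β l =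
      ∑ l, Function.update x j 0 l * β l := by
  have h1 : ∀ t, ∑ l, Function.update x j t l * β l = ∑ l, Function.update x j 0 l * β l + t * β j := by
    intro t
    have : Function.update x j t = Function.update x j 0 + t • Pi.single j 1 := by
      ext i
      by_cases h : i = j
      · subst h; simp
      · simp [h]
    simp [this, add_mul, Finset.sum_add_distrib, Pi.single_apply]
  have : ∀ y : Fin d → ℝ, ∑ l, shear j k (-β j / β k) y l * β l = ∑ l, y l * β l - y j * β j := by
    intro y
    simp [shear, add_mul, Finset.sum_add_distrib, Pi.single_apply]
    field_simp
    ring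
  rw [this, h1]; simp

/-- The `(j, k)` entry `∂_j ∂_k p (x)` of the Hessian, in the form used by `score2`. -/
noncomputable def hess {d : ℕ} (p : (Fin d → ℝ) → ℝ) (x : Fin d → ℝ) (j k : Fin d) : ℝ :=
  fderiv ℝ (fun y => fderiv ℝ p y (Pi.single k 1)) x (Pi.single j 1)

lemma contDiff_partial {d : ℕ} {p : (Fin d → ℝ) → ℝ} (hp : ContDiff ℝ 2 p) (v : Fin d → ℝ) :
    ContDiff ℝ 1 (fun y => fderiv ℝ p y v) :=
  (hp.fderiv_right (m := 1) (by norm_num)).clm_apply contDiff_const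

lemma continuous_hess {d : ℕ} {p : (Fin d → ℝ) → ℝ} (hp : ContDiff ℝ 2 p) (j k : Fin d) :
    Continuous (fun x => hess p x j k) :=
  ((contDiff_partial hp (Pi.single k 1)).continuous_fderiv (by norm_num)).clm_apply
    continuous_const

lemma hess_symm {d : ℕ} {p : (Fin d → ℝ) → ℝ} (hp : ContDiff ℝ 2 p) (x : Fin d → ℝ)
    (j k : Fin d) : hess p x j k = hess p x k j := by
  have hd : DifferentiableAt ℝ (fderiv ℝ p) x :=
    ((hp.fderiv_right (m := 1) (by norm_num)).differentiable (by norm_num)) x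
  have h := (hp.contDiffAt (x := x)).isSymmSndFDerivAt (by simp)
  have e : ∀ v w, fderiv ℝ (fun y => fderiv ℝ p y v) x w = fderiv ℝ (fderiv ℝ p) x w v := by
    intro v w
    rw [fderiv_clm_apply hd (differentiableAt_const v)]
    simp
  rw [hess, hess, e, e]
  exact h _ _

lemma hasDerivAt_inner_update {d : ℕ} (β x : Fin d → ℝ) (j : Fin d) (t : ℝ) :
    HasDerivAt (fun t => ∑ l, Function.update x j t l * β l) (β j) t := by
  have h := HasDerivAt.fun_sum (u := Finset.univ) fun l _ =>
    ((hasDerivAt_pi.1 (hasDerivAt_update x j t) l).mul_const (β l))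
  simpa [Pi.single_apply] using h

/-- The Stein identity for the pure second derivatives. On each line parallel to `e_j`,
`g ∂_j² p - ∂_j² g p` is the derivative of `g ∂_j p - ∂_j g p`, so the two integrations by parts
are done at once and integrability of `∂_j g ∂_j p` is not needed. -/
lemma integral_diag {d : ℕ} {p : (Fin d → ℝ) → ℝ} (hp : ContDiff ℝ 2 p)
    {f : ℝ → ℝ} (hf : ContDiff ℝ 2 f) (β : Fin d → ℝ) (j : Fin d)
    (hi1 : Integrable fun x => f (∑ l, x l * β l) * hess p x j j)
    (hi2 : Integrable fun x => deriv (deriv f) (∑ l, x l * β l) * p x)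
    (hbound1 : ∀ᵐ x ∂(volume : Measure (Fin d → ℝ)),
      Tendsto (fun t => f (∑ l, Function.update x j t l * β l) *
        fderiv ℝ p (Function.update x j t) (Pi.single j 1)) atTop (nhds 0) ∧
      Tendsto (fun t => f (∑ l, Function.update x j t l * β l) *
        fderiv ℝ p (Function.update x j t) (Pi.single j 1)) atBot (nhds 0))
    (hbound2 : ∀ᵐ x ∂(volume : Measure (Fin d → ℝ)),
      Tendsto (fun t => deriv f (∑ l, Function.update x j t l * β l) * β j *
        p (Function.update x j t)) atTop (nhds 0) ∧
      Tendsto (fun t => deriv f (∑ l, Function.update x j t l * β l) * β j *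
        p (Function.update x j t)) atBot (nhds 0)) :
    ∫ x, f (∑ l, x l * β l) * hess p x j j =
      β j ^ 2 * ∫ x, deriv (deriv f) (∑ l, x l * β l) * p x := by
  rw [← integral_const_mul, ← sub_eq_zero, ← integral_sub hi1 (hi2.const_mul _)]
  have hF := hi1.sub (hi2.const_mul (β j ^ 2))
  refine integral_eq_zero_of_slice hF j ?_
  filter_upwards [ae_integrable_slice hF j, hbound1, hbound2] with x hx h1 h2
  have hf' : ContDiff ℝ 1 (deriv f) :=
    ((contDiff_succ_iff_deriv (n := 1)).1 (by simpa [one_add_one_eq_two] using hf)).2.2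
  have hder : ∀ t, HasDerivAt (fun t => f (∑ l, Function.update x j t l * β l) *
        fderiv ℝ p (Function.update x j t) (Pi.single j 1) -
        deriv f (∑ l, Function.update x j t l * β l) * β j * p (Function.update x j t))
      (f (∑ l, Function.update x j t l * β l) * hess p (Function.update x j t) j j -
        β j ^ 2 * (deriv (deriv f) (∑ l, Function.update x j t l * β l) *
          p (Function.update x j t))) t := by
    intro t
    have hu := hasDerivAt_inner_update β x j t
    have a1 := ((hf.differentiable (by norm_num)) (∑ l, Function.update x j t l * β l)).hasDerivAt.comp t hu
    have a2 := ((hf'.differentiable (by norm_num)) (∑ l, Function.update x j t l * β l)).hasDerivAt.comp t hu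
    have b1 := ((hp.differentiable (by norm_num)) (Function.update x j t)).hasFDerivAt.comp_hasDerivAt t
      (hasDerivAt_update x j t)
    have b2 := (((contDiff_partial hp (Pi.single j 1)).differentiable (by norm_num))
      (Function.update x j t)).hasFDerivAt.comp_hasDerivAt t (hasDerivAt_update x j t)
    refine ((a1.mul b2).sub ((a2.mul_const (β j)).mul b1)).congr_deriv ?_
    simp only [hess, Function.comp_apply]
    ring
  have := integral_of_hasDerivAt_of_tendsto hder hx (h1.2.sub h2.2) (h1.1.sub h2.1)
  simpa using this

/-- If `β_j = 0` then `f(⟨x, β⟩)` is constant along `e_j`, and a single integration in `x_j` gives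
the mixed entry. -/
lemma integral_mixed_of_eq_zero {d : ℕ} {p : (Fin d → ℝ) → ℝ} (hp : ContDiff ℝ 2 p)
    {f : ℝ → ℝ} (hf : ContDiff ℝ 2 f) (β : Fin d → ℝ) {j : Fin d} (k : Fin d) (hj : β j = 0)
    (hi1 : Integrable fun x => f (∑ l, x l * β l) * hess p x j k)
    (hbound1 : ∀ᵐ x ∂(volume : Measure (Fin d → ℝ)),
      Tendsto (fun t => f (∑ l, Function.update x j t l * β l) *
        fderiv ℝ p (Function.update x j t) (Pi.single k 1)) atTop (nhds 0) ∧
      Tendsto (fun t => f (∑ l, Function.update x j t l * β l) *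
        fderiv ℝ p (Function.update x j t) (Pi.single k 1)) atBot (nhds 0)) :
    ∫ x, f (∑ l, x l * β l) * hess p x j k = 0 := by
  refine integral_eq_zero_of_slice hi1 j ?_
  filter_upwards [ae_integrable_slice hi1 j, hbound1] with x hx h1
  have hder : ∀ t, HasDerivAt (fun t => f (∑ l, Function.update x j t l * β l) *
        fderiv ℝ p (Function.update x j t) (Pi.single k 1))
      (f (∑ l, Function.update x j t l * β l) * hess p (Function.update x j t) j k) t := by
    intro t
    have a1 := ((hf.differentiable (by norm_num)) (∑ l, Function.update x j t l * β l)).hasDerivAt.comp t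
      (hasDerivAt_inner_update β x j t)
    have b2 := (((contDiff_partial hp (Pi.single k 1)).differentiable (by norm_num))
      (Function.update x j t)).hasFDerivAt.comp_hasDerivAt t (hasDerivAt_update x j t)
    refine (a1.mul b2).congr_deriv ?_
    simp [hess, hj]
  simpa using integral_of_hasDerivAt_of_tendsto hder hx h1.2 h1.1

/-- The second derivative of `p` in the direction `v = e_j + c e_k` orthogonal to `β` integrates to
zero against `f(⟨x, β⟩)`, a function constant along `v`. The boundary terms vanish because `p` is
integrable on almost every line parallel to `v`. -/
lemma integral_sheared {d : ℕ} {p : (Fin d → ℝ) → ℝ} (hp : ContDiff ℝ 2 p)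
    (hpi : Integrable p) (f : ℝ → ℝ) (β : Fin d → ℝ) {j k : Fin d} (hjk : j ≠ k) (hk : β k ≠ 0)
    (c : ℝ) (hc : c = -β j / β k)
    (hi : Integrable fun x => f (∑ l, x l * β l) *
      (hess p x j j + 2 * c * hess p x j k + c ^ 2 * hess p x k k)) :
    ∫ x, f (∑ l, x l * β l) *
      (hess p x j j + 2 * c * hess p x j k + c ^ 2 * hess p x k k) = 0 := by
  have hφ := measurePreserving_shear hjk c
  have hmap := integral_map hφ.aemeasurable (hφ.map_eq.symm ▸ hi.aestronglyMeasurable)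
  rw [hφ.map_eq] at hmap
  rw [hmap]
  have hi' := hφ.integrable_comp_of_integrable hi
  have hpi' := hφ.integrable_comp_of_integrable hpi
  refine integral_eq_zero_of_slice hi' j ?_
  filter_upwards [ae_integrable_slice hi' j, ae_integrable_slice hpi' j] with x hx hpx
  simp only [Function.comp_apply] at hx hpx
  simp only [hc, inner_shear β hk] at hx ⊢
  simp only [← hc] at hx ⊢
  have hd : ∀ v t, HasDerivAt
      (fun t => fderiv ℝ p (shear j k c (Function.update x j t)) v)
      (fderiv ℝ (fun y => fderiv ℝ p y v) (shear j k c (Function.update x j t))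
        (Pi.single j 1 + c • Pi.single k 1)) t := by
    intro v t
    have h := (((contDiff_partial hp v).differentiable (by norm_num))
      (shear j k c (Function.update x j t))).hasFDerivAt.comp_hasDerivAt t
        (hasDerivAt_shear_update j k c x t)
    exact h
  refine integral_second_deriv_eq_zero (q := fun t => p (shear j k c (Function.update x j t)))
    (q' := fun t => fderiv ℝ p (shear j k c (Function.update x j t)) (Pi.single j 1) +
      c * fderiv ℝ p (shear j k c (Function.update x j t)) (Pi.single k 1)) _ (fun t => ?_)
    (fun t => ?_) hpx hx
  · have := ((hp.differentiable (by norm_num))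
      (shear j k c (Function.update x j t))).hasFDerivAt.comp_hasDerivAt t
        (hasDerivAt_shear_update j k c x t)
    refine this.congr_deriv ?_
    simp
  · refine ((hd _ t).add ((hd _ t).const_mul c)).congr_deriv ?_
    have := hess_symm hp (shear j k c (Function.update x j t)) j k
    simp only [hess] at this ⊢
    simp only [map_add, map_smul, smul_eq_mul, this]
    ring

/-- Passing from expectations of functions of `X` to Lebesgue integrals against the density. -/
lemma integrable_and_integral_law {d : ℕ} {Ω : Type*} [MeasurableSpace Ω] {P : Measure Ω}
    {p : (Fin d → ℝ) → ℝ} (hp_pos : ∀ x, 0 < p x) (hp : Continuous p)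
    {X : Ω → Fin d → ℝ} (hX : AEMeasurable X P)
    (hlaw : Measure.map X P =
      (volume : Measure (Fin d → ℝ)).withDensity fun x => ENNReal.ofReal (p x))
    {φ : (Fin d → ℝ) → ℝ} (hφ : Continuous φ) :
    (Integrable (fun ω => φ (X ω)) P → Integrable fun x => φ x * p x) ∧
      ∫ ω, φ (X ω) ∂P = ∫ x, φ x * p x := by
  have hm : Measurable fun x => ENNReal.ofReal (p x) := hp.measurable.ennreal_ofReal
  have hlt : ∀ᵐ x ∂(volume : Measure (Fin d → ℝ)), ENNReal.ofReal (p x) < ⊤ := by simp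
  have e : ∀ x, (ENNReal.ofReal (p x)).toReal • φ x = φ x * p x := fun x => by
    rw [ENNReal.toReal_ofReal (hp_pos x).le, smul_eq_mul, mul_comm]
  constructor
  · intro h
    have h' := (integrable_map_measure hφ.aestronglyMeasurable hX).2 h
    rw [hlaw, integrable_withDensity_iff_integrable_smul' hm hlt] at h'
    simpa only [e] using h'
  · rw [← integral_map hX hφ.aestronglyMeasurable, hlaw,
      integral_withDensity_eq_integral_toReal_smul hm hlt]
    simp only [e]

/-- **Second-order Stein identity for single-index models.** In the model
`Y = f(⟨X, β*⟩) + ε` with `X` having an everywhere positive `C²` density `p` on `ℝ^d`,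
`‖β*‖₂ = 1`, `f : ℝ → ℝ` twice continuously differentiable and `ε` mean-zero independent
of `X`, if the second-order Stein identity applies to `x ↦ f(⟨x, β*⟩)` and `Y·T_p(X)` is
entrywise integrable, then `E[Y · T_p(X)] = E[f''(⟨X, β*⟩)] · β* β*ᵀ` (entrywise). -/
theorem stmt_5 {d : ℕ} {Ω : Type*} [MeasurableSpace Ω] (P : Measure Ω)
    [IsProbabilityMeasure P]
    (p : (Fin d → ℝ) → ℝ) (hp_pos : ∀ x, 0 < p x) (hp : ContDiff ℝ 2 p)
    (X : Ω → Fin d → ℝ) (hX : AEMeasurable X P)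
    (hlaw : Measure.map X P =
      (volume : Measure (Fin d → ℝ)).withDensity fun x => ENNReal.ofReal (p x))
    (f : ℝ → ℝ) (hf : ContDiff ℝ 2 f)
    (β : Fin d → ℝ) (hβ : ∑ j, β j ^ 2 = 1)
    (ε : Ω → ℝ) (hεint : Integrable ε P) (hεmean : ∫ ω, ε ω ∂P = 0)
    (hindep : IndepFun X ε P)
    (Y : Ω → ℝ) (hY : ∀ ω, Y ω = f (∑ j, X ω j * β j) + ε ω)
    -- Stein hypotheses for `g : x ↦ f(⟨x, β*⟩)` : integrability of `g · T_p` and of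
    -- `f''(⟨x, β*⟩)`, and vanishing boundary terms in the double integration by parts
    (hint1 : ∀ j k, Integrable (fun ω => f (∑ l, X ω l * β l) * score2 p (X ω) j k) P)
    (hint2 : Integrable (fun ω => deriv (deriv f) (∑ l, X ω l * β l)) P)
    (hbound1 : ∀ j k : Fin d, ∀ᵐ x ∂(volume : Measure (Fin d → ℝ)),
      Tendsto (fun t => f (∑ l, Function.update x j t l * β l) *
        fderiv ℝ p (Function.update x j t) (Pi.single k 1)) atTop (nhds 0) ∧
      Tendsto (fun t => f (∑ l, Function.update x j t l * β l) *
        fderiv ℝ p (Function.update x j t) (Pi.single k 1)) atBot (nhds 0))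
    (hbound2 : ∀ j k : Fin d, ∀ᵐ x ∂(volume : Measure (Fin d → ℝ)),
      Tendsto (fun t => deriv f (∑ l, Function.update x k t l * β l) * β j *
        p (Function.update x k t)) atTop (nhds 0) ∧
      Tendsto (fun t => deriv f (∑ l, Function.update x k t l * β l) * β j *
        p (Function.update x k t)) atBot (nhds 0))
    (hYT : ∀ j k, Integrable (fun ω => Y ω * score2 p (X ω) j k) P) :
    ∀ j k, ∫ ω, Y ω * score2 p (X ω) j k ∂P =
      (∫ ω, deriv (deriv f) (∑ l, X ω l * β l) ∂P) * (β j * β k) := by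
  intro j k
  have hfc := hf.continuous
  have hf''c : Continuous (deriv (deriv f)) :=
    ((contDiff_succ_iff_deriv (n := 1)).1
      (by simpa [one_add_one_eq_two] using hf)).2.2.continuous_deriv (by norm_num)
  have hsc : ∀ j k, Continuous fun x => score2 p x j k := fun j k =>
    (continuous_hess hp j k).div hp.continuous fun x => (hp_pos x).ne'
  have hsp : ∀ x j k, f (∑ l, x l * β l) * score2 p x j k * p x =
      f (∑ l, x l * β l) * hess p x j k := fun x j k => by
    rw [mul_assoc, score2, div_mul_cancel₀ _ (hp_pos x).ne', hess]
  have law {φ : (Fin d → ℝ) → ℝ} (hφ : Continuous φ) :=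
    integrable_and_integral_law hp_pos hp.continuous hX hlaw hφ
  have hpi : Integrable p := by
    simpa using (law (φ := fun _ => 1) continuous_const).1 (integrable_const 1)
  have hI : ∀ j k, Integrable fun x => f (∑ l, x l * β l) * hess p x j k := fun j k => by
    have hc := hsc j k
    simpa only [hsp] using (law (φ := fun x => f (∑ l, x l * β l) * score2 p x j k)
      (by fun_prop)).1 (hint1 j k)
  have hI2 := (law (φ := fun x => deriv (deriv f) (∑ l, x l * β l)) (by fun_prop)).1 hint2
  have hS := (law (φ := fun x => deriv (deriv f) (∑ l, x l * β l)) (by fun_prop)).2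
  have hdiag := fun j => integral_diag hp hf β j (hI j j) hI2 (hbound1 j j) (hbound2 j j)
  -- `score2 p (X ω) j k` itself need not be integrable; factorization under independence holds
  -- without this.
  have hnoise : ∫ ω, Y ω * score2 p (X ω) j k ∂P =
      ∫ ω, f (∑ l, X ω l * β l) * score2 p (X ω) j k ∂P := by
    rw [← sub_eq_zero, ← integral_sub (hYT j k) (hint1 j k)]
    have h := hindep.integral_fun_comp_mul_comp (f := fun x => score2 p x j k) (g := id) hX
      hεint.aemeasurable (hsc j k).aestronglyMeasurable aestronglyMeasurable_id
    simp only [id, hεmean, mul_zero] at h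
    rw [← h]
    refine integral_congr_ae (.of_forall fun ω => ?_)
    simp only [hY]
    ring
  have hc := hsc j k
  rw [hnoise, (law (φ := fun x => f (∑ l, x l * β l) * score2 p x j k) (by fun_prop)).2, hS]
  simp only [hsp]
  rcases eq_or_ne j k with rfl | hjk
  · rw [hdiag]; ring
  rcases eq_or_ne (β j) 0 with hj | hj
  · rw [integral_mixed_of_eq_zero hp hf β k hj (hI j k) (hbound1 j k), hj]; simp
  rcases eq_or_ne (β k) 0 with hk | hk
  · simp only [hess_symm hp _ j k]
    rw [integral_mixed_of_eq_zero hp hf β j hk (hI k j) (hbound1 k j), hk]; simp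
  -- For `β_j, β_k ≠ 0` the mixed entry follows by polarization: it is determined by the diagonal
  -- entries and the vanishing second derivative in the direction `e_j + c e_k ⊥ β`.
  obtain ⟨c, hc⟩ : ∃ c, c = -β j / β k := ⟨_, rfl⟩
  have hsum : (fun x => f (∑ l, x l * β l) *
      (hess p x j j + 2 * c * hess p x j k + c ^ 2 * hess p x k k)) =
      fun x => f (∑ l, x l * β l) * hess p x j j +
        2 * c * (f (∑ l, x l * β l) * hess p x j k) +
        c ^ 2 * (f (∑ l, x l * β l) * hess p x k k) := by
    ext x; ring
  have hJ1 := (hI j j).fun_add ((hI j k).const_mul (2 * c))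
  have hJ2 := (hI k k).const_mul (c ^ 2)
  have h := integral_sheared hp hpi f β hjk hk c hc (hsum ▸ hJ1.add hJ2)
  rw [hsum, integral_add hJ1 hJ2, integral_add (hI j j) ((hI j k).const_mul (2 * c)),
    integral_const_mul, integral_const_mul, hdiag, hdiag, hc] at h
  field_simp at h
  apply mul_left_cancel₀ hj
  linear_combination (-1 / 2 : ℝ) * h
end

section
/- Let Y and Z be real random variables on a common probability space with E[Y⁶] ≤ M and E[|Z|³] ≤ 8M, and let τ > 0. Then |E[ψ_τ(Y)·ψ_{τ²}(Z)] − E[Y·Z]| ≤ 9M·τ^{-3}. -/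
/-!
The bound holds pointwise before taking expectations. With `a = |Y| / τ` and `b = |Z| / τ ^ 2`,
the sign factors cancel and
`|ψ_τ(Y) ψ_{τ²}(Z) - Y Z| = τ ^ 3 * (a * b - min a 1 * min b 1)`.
The bracket vanishes when `a, b ≤ 1`, and otherwise `a * b ≤ a ^ 6 + b ^ 3`
(`mul_sub_min_mul_min_le`), so the bias is at most `(Y ^ 6 + |Z| ^ 3) / τ ^ 3`
(`abs_trunc_mul_trunc_sub_le`). Integrating gives `(M + 8 * M) / τ ^ 3`.
-/

open MeasureTheory

/-- The truncation operator `ψ_τ(x) = sign(x) · min(|x|, τ)`. -/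
noncomputable def trunc (τ x : ℝ) : ℝ := Real.sign x * min |x| τ

theorem trunc_eq_max_min {τ : ℝ} (hτ : 0 < τ) (x : ℝ) : trunc τ x = max (-τ) (min x τ) := by
  unfold trunc
  rcases lt_trichotomy x 0 with h | h | h
  · rw [Real.sign_of_neg h, abs_of_neg h, min_eq_left (by linarith : x ≤ τ), neg_one_mul,
      ← max_neg_neg, neg_neg, max_comm]
  · subst h
    simp [hτ.le]
  · rw [Real.sign_of_pos h, abs_of_pos h, one_mul, max_eq_right]
    exact le_min (by linarith) (by linarith)

theorem measurable_trunc {τ : ℝ} (hτ : 0 < τ) : Measurable (trunc τ) := by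
  rw [funext (trunc_eq_max_min hτ)]
  fun_prop

theorem mul_le_pow_six_add_pow_three {a b : ℝ} (ha : 0 ≤ a) (hb : 0 ≤ b) (h : 1 < a ∨ 1 < b) :
    a * b ≤ a ^ 6 + b ^ 3 := by
  have ha6 : 0 ≤ a ^ 6 := by positivity
  have hb3 : 0 ≤ b ^ 3 := by positivity
  rcases le_total a 1 with ha1 | ha1
  · have hb1 : 1 ≤ b := (h.resolve_left ha1.not_gt).le
    have : b ≤ b ^ 3 := le_self_pow₀ hb1 (by norm_num)
    nlinarith
  · rcases le_total b 1 with hb1 | hb1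
    · have : a ≤ a ^ 6 := le_self_pow₀ ha1 (by norm_num)
      nlinarith
    · have h1 : a ^ 2 ≤ a ^ 6 := pow_le_pow_right₀ ha1 (by norm_num)
      have h2 : b ^ 2 ≤ b ^ 3 := pow_le_pow_right₀ hb1 (by norm_num)
      nlinarith [sq_nonneg (a - b)]

theorem mul_sub_min_mul_min_le {a b : ℝ} (ha : 0 ≤ a) (hb : 0 ≤ b) :
    a * b - min a 1 * min b 1 ≤ a ^ 6 + b ^ 3 := by
  by_cases h : 1 < a ∨ 1 < b
  · have h1 := mul_le_pow_six_add_pow_three ha hb h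
    have h2 : 0 ≤ min a 1 * min b 1 := by positivity
    linarith
  · push Not at h
    rw [min_eq_left h.1, min_eq_left h.2, sub_self]
    positivity

theorem abs_trunc_mul_trunc_sub_le {τ : ℝ} (hτ : 0 < τ) (y z : ℝ) :
    |trunc τ y * trunc (τ ^ 2) z - y * z| ≤ (y ^ 6 + |z| ^ 3) / τ ^ 3 := by
  have hsign : ∀ x : ℝ, x = Real.sign x * |x| := fun x => by
    rcases lt_trichotomy x 0 with h | h | h
    · rw [Real.sign_of_neg h, abs_of_neg h]; ring
    · simp [h]
    · rw [Real.sign_of_pos h, abs_of_pos h]; ring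
  have hsign1 : ∀ x : ℝ, |Real.sign x| ≤ 1 := fun x => by
    rcases Real.sign_apply_eq x with h | h | h <;> simp [h]
  have hfac : trunc τ y * trunc (τ ^ 2) z - y * z =
      Real.sign y * Real.sign z * (min |y| τ * min |z| (τ ^ 2) - |y| * |z|) := by
    have e : y * z = (Real.sign y * |y|) * (Real.sign z * |z|) := by rw [← hsign, ← hsign]
    rw [e]
    unfold trunc
    ring
  have hle : min |y| τ * min |z| (τ ^ 2) ≤ |y| * |z| :=
    mul_le_mul (min_le_left _ _) (min_le_left _ _) (by positivity) (abs_nonneg _)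
  have hab : |trunc τ y * trunc (τ ^ 2) z - y * z| ≤
      |y| * |z| - min |y| τ * min |z| (τ ^ 2) := by
    rw [hfac, abs_mul, abs_mul, abs_sub_comm, abs_of_nonneg (sub_nonneg.2 hle)]
    exact mul_le_of_le_one_left (sub_nonneg.2 hle)
      (mul_le_one₀ (hsign1 y) (abs_nonneg _) (hsign1 z))
  refine hab.trans ?_
  -- Rescale to truncation levels equal to one.
  obtain ⟨a, ha, hya⟩ : ∃ a, 0 ≤ a ∧ |y| = τ * a := ⟨|y| / τ, by positivity, by field_simp⟩
  obtain ⟨b, hb, hzb⟩ : ∃ b, 0 ≤ b ∧ |z| = τ ^ 2 * b :=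
    ⟨|z| / τ ^ 2, by positivity, by field_simp⟩
  have h1 : min (τ * a) τ = τ * min a 1 := by rw [mul_min_of_nonneg _ _ hτ.le, mul_one]
  have h2 : min (τ ^ 2 * b) (τ ^ 2) = τ ^ 2 * min b 1 := by
    rw [mul_min_of_nonneg _ _ (by positivity), mul_one]
  have hy6 : y ^ 6 = |y| ^ 6 := ((by decide : Even 6).pow_abs y).symm
  rw [hy6, hya, hzb, h1, h2, le_div_iff₀ (by positivity)]
  calc _ = τ ^ 6 * (a * b - min a 1 * min b 1) := by ring
    _ ≤ τ ^ 6 * (a ^ 6 + b ^ 3) :=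
      mul_le_mul_of_nonneg_left (mul_sub_min_mul_min_le ha hb) (by positivity)
    _ = _ := by ring

theorem abs_mul_le_pow_six_add_pow_three_add_one (y z : ℝ) :
    |y * z| ≤ y ^ 6 + |z| ^ 3 + 1 := by
  have hy6 : y ^ 6 = |y| ^ 6 := ((by decide : Even 6).pow_abs y).symm
  rw [hy6, abs_mul]
  have h := mul_sub_min_mul_min_le (abs_nonneg y) (abs_nonneg z)
  have h1 : min |y| 1 * min |z| 1 ≤ 1 :=
    mul_le_one₀ (min_le_right _ _) (by positivity) (min_le_right _ _)
  linarith

/-- Truncation bias bound: if `E[Y⁶] ≤ M` and `E[|Z|³] ≤ 8M` then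
`|E[ψ_τ(Y)·ψ_{τ²}(Z)] − E[Y·Z]| ≤ 9M·τ⁻³`. -/
theorem stmt_18 {Ω : Type*} [MeasurableSpace Ω] (P : Measure Ω) [IsProbabilityMeasure P]
    (Y Z : Ω → ℝ) (hY : AEMeasurable Y P) (hZ : AEMeasurable Z P)
    (M : ℝ) (hM : 0 < M)
    (hY6i : Integrable (fun ω => Y ω ^ 6) P) (hZ3i : Integrable (fun ω => |Z ω| ^ 3) P)
    (hY6 : ∫ ω, Y ω ^ 6 ∂P ≤ M) (hZ3 : ∫ ω, |Z ω| ^ 3 ∂P ≤ 8 * M)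
    (τ : ℝ) (hτ : 0 < τ) :
    |(∫ ω, trunc τ (Y ω) * trunc (τ ^ 2) (Z ω) ∂P) - ∫ ω, Y ω * Z ω ∂P| ≤
      9 * M / τ ^ 3 := by
  have hsum : Integrable (fun ω => Y ω ^ 6 + |Z ω| ^ 3) P := hY6i.add hZ3i
  have hYZ : Integrable (fun ω => Y ω * Z ω) P :=
    (hsum.add (integrable_const (1 : ℝ))).mono' (hY.mul hZ).aestronglyMeasurable
      (ae_of_all _ fun ω => abs_mul_le_pow_six_add_pow_three_add_one (Y ω) (Z ω))
  have hmeas : AEMeasurable (fun ω => trunc τ (Y ω) * trunc (τ ^ 2) (Z ω)) P :=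
    ((measurable_trunc hτ).comp_aemeasurable hY).mul
      ((measurable_trunc (by positivity)).comp_aemeasurable hZ)
  have hdiff : Integrable (fun ω => trunc τ (Y ω) * trunc (τ ^ 2) (Z ω) - Y ω * Z ω) P :=
    (hsum.div_const (τ ^ 3)).mono' (hmeas.sub (hY.mul hZ)).aestronglyMeasurable
      (ae_of_all _ fun ω => abs_trunc_mul_trunc_sub_le hτ (Y ω) (Z ω))
  have htrunc : Integrable (fun ω => trunc τ (Y ω) * trunc (τ ^ 2) (Z ω)) P := by
    simpa [Pi.add_def] using hdiff.add hYZ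
  rw [← integral_sub htrunc hYZ]
  calc |∫ ω, (trunc τ (Y ω) * trunc (τ ^ 2) (Z ω) - Y ω * Z ω) ∂P|
      ≤ ∫ ω, |trunc τ (Y ω) * trunc (τ ^ 2) (Z ω) - Y ω * Z ω| ∂P := abs_integral_le_integral_abs
    _ ≤ ∫ ω, (Y ω ^ 6 + |Z ω| ^ 3) / τ ^ 3 ∂P :=
      integral_mono hdiff.abs (hsum.div_const _) fun ω =>
        abs_trunc_mul_trunc_sub_le hτ (Y ω) (Z ω)
    _ = (∫ ω, Y ω ^ 6 ∂P + ∫ ω, |Z ω| ^ 3 ∂P) / τ ^ 3 := by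
      rw [integral_div, integral_add hY6i hZ3i]
    _ ≤ 9 * M / τ ^ 3 := by
      gcongr
      linarith
end
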